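/- Petersen's lemma (non-strict version): Let 𝐂 ∈ ℝ^{n×n} be symmetric, 𝐌 ∈ ℝ^{n×p} with 𝐌 ≠ 0, 𝐃̄ ∈ ℝ^{q×q} symmetric positive definite, and 𝐍 ∈ ℝ^{n×q} with 𝐍 ≠ 0. Then 𝐂 + 𝐌𝐃𝐍ᵀ + 𝐍𝐃ᵀ𝐌ᵀ ⪯ 0 holds for every 𝐃 ∈ ℝ^{p×q} with 𝐃ᵀ𝐃 ⪯ 𝐃̄ if and only if there exists a scalar μ > 0 such that 𝐂 + μ𝐌𝐌ᵀ + μ⁻¹𝐍𝐃̄𝐍ᵀ ⪯ 0. -/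

import Mathlib

open Matrix

/-!
A vector `w` is of the form `D Nᴴ x` for some `D` with `Dᴴ D ⪯ E` exactly when
`‖w‖² ≤ xᴴ N E Nᴴ x`. Hence the robust inequality says that the quadratic form of the block matrix
`[-C, -M; -Mᴴ, 0]` is nonnegative wherever that of `[N E Nᴴ, 0; 0, -1]` is. By the S-lemma this
holds iff `[-C - c N E Nᴴ, -M; -Mᴴ, c]` is positive semidefinite for some `c ≥ 0`; here `c > 0`
because `M ≠ 0`, and the Schur complement with respect to the last block is the required inequality
with `μ = c⁻¹`.
-/

section SLemma

theorem exists_neg_root_pos_root_of_quadratic {a b c : ℝ} (ha : 0 < a) (hc : c < 0) :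
    ∃ s t : ℝ, s < 0 ∧ 0 < t ∧ a * (s * t) = c ∧
      a * (s * s) + b * s + c = 0 ∧ a * (t * t) + b * t + c = 0 := by
  have hdiscrim : 0 ≤ discrim a b c := by
    unfold discrim
    nlinarith [sq_nonneg b, mul_neg_of_pos_of_neg ha hc]
  obtain ⟨r, hr⟩ := exists_quadratic_eq_zero ha.ne' ⟨_, (Real.mul_self_sqrt hdiscrim).symm⟩
  have hr0 : r ≠ 0 := by
    rintro rfl
    simp [hc.ne] at hr
  have hvieta : a * (c / (a * r) * r) = c := by field_simp
  have hroot : a * (c / (a * r) * (c / (a * r))) + b * (c / (a * r)) + c = 0 := by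
    field_simp
    linear_combination c * hr
  rcases hr0.lt_or_gt with hneg | hpos
  · exact ⟨r, c / (a * r), hneg, div_pos_of_neg_of_neg hc (mul_neg_of_pos_of_neg ha hneg),
      by rw [mul_comm r, hvieta], hr, hroot⟩
  · exact ⟨c / (a * r), r, div_neg_of_neg_of_pos hc (mul_pos ha hpos), hpos, hvieta, hroot, hr⟩

theorem quadraticForm_add_smul {R V : Type*} [CommRing R] [AddCommGroup V] [Module R V]
    (Q : QuadraticForm R V) (x y : V) (t : R) :
    Q (x + t • y) = Q y * (t * t) + QuadraticMap.polar Q x y * t + Q x := by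
  simp only [QuadraticMap.map_add Q, QuadraticMap.map_smul, QuadraticMap.polar_smul_right,
    smul_eq_mul]
  ring

variable {V : Type*} [AddCommGroup V] [Module ℝ V] {Q₀ Q₁ : QuadraticForm ℝ V}

theorem quadraticForm_div_le_div (h : ∀ x, 0 ≤ Q₁ x → 0 ≤ Q₀ x) {x y : V}
    (hx : Q₁ x < 0) (hy : 0 < Q₁ y) : Q₀ x / Q₁ x ≤ Q₀ y / Q₁ y := by
  obtain ⟨s, t, hs, ht, hst, hs_root, ht_root⟩ :=
    exists_neg_root_pos_root_of_quadratic (b := QuadraticMap.polar Q₁ x y) hy hx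
  have hQs := h (x + s • y) (by rw [quadraticForm_add_smul, hs_root])
  have hQt := h (x + t • y) (by rw [quadraticForm_add_smul, ht_root])
  rw [quadraticForm_add_smul] at hQs hQt
  -- Weighting the values at `s` and `t` by `t` and `-s` cancels the polar term.
  have hle : s * t * Q₀ y ≤ Q₀ x := by
    refine le_of_mul_le_mul_left ?_ (sub_pos.2 (hs.trans ht))
    linarith [mul_nonneg ht.le hQs, mul_nonneg (neg_nonneg.2 hs.le) hQt]
  rw [div_le_iff_of_neg hx, ← hst]
  calc Q₀ y / Q₁ y * (Q₁ y * (s * t)) = s * t * Q₀ y := by field_simp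
    _ ≤ Q₀ x := hle

theorem s_lemma (h : ∀ x, 0 ≤ Q₁ x → 0 ≤ Q₀ x) (hpos : ∃ x, 0 < Q₁ x) :
    ∃ c : ℝ, 0 ≤ c ∧ ∀ x, c * Q₁ x ≤ Q₀ x := by
  obtain ⟨c, hlower, hupper⟩ := exists_between_of_forall_le
    (s := insert 0 ((fun x ↦ Q₀ x / Q₁ x) '' {x | Q₁ x < 0}))
    (t := (fun x ↦ Q₀ x / Q₁ x) '' {x | 0 < Q₁ x})
    (Set.insert_nonempty _ _) (Set.Nonempty.image _ hpos) (by
      rintro _ (rfl | ⟨x, hx, rfl⟩) _ ⟨y, hy, rfl⟩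
      · exact div_nonneg (h y hy.le) hy.le
      · exact quadraticForm_div_le_div h hx hy)
  refine ⟨c, hlower (Set.mem_insert _ _), fun x ↦ ?_⟩
  rcases lt_trichotomy (Q₁ x) 0 with hx | hx | hx
  · exact (div_le_iff_of_neg hx).1 (hlower (.inr ⟨x, hx, rfl⟩))
  · simpa only [hx, mul_zero] using h x hx.ge
  · exact (le_div_iff₀ hx).1 (hupper ⟨x, hx, rfl⟩)

end SLemma

section RCLike

open scoped ComplexOrder MatrixOrder
open RCLike WithLp

variable {𝕜 n p q : Type*} [RCLike 𝕜]

section ReQuadraticForm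

variable [Fintype n]

/-- The real quadratic form `x ↦ re (xᴴ A x)` of a square matrix `A`. For Hermitian `A` the
value `xᴴ A x` is already real; taking its real part yields a form over `ℝ` for every `A`, so that
the real S-lemma applies to complex matrices. -/
noncomputable def reQuadraticForm (A : Matrix n n 𝕜) : QuadraticForm ℝ (n → 𝕜) :=
  LinearMap.BilinMap.toQuadraticMap <| LinearMap.mk₂ ℝ (fun x y ↦ re (star x ⬝ᵥ A *ᵥ y))
    (by simp [add_dotProduct]) (by simp [smul_dotProduct, smul_re])
    (by simp [mulVec_add, dotProduct_add]) (by simp [mulVec_smul, dotProduct_smul, smul_re])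

theorem reQuadraticForm_apply (A : Matrix n n 𝕜) (x : n → 𝕜) :
    reQuadraticForm A x = re (star x ⬝ᵥ A *ᵥ x) := rfl

theorem reQuadraticForm_sub_smul (A B : Matrix n n 𝕜) (c : ℝ) (x : n → 𝕜) :
    reQuadraticForm (A - c • B) x = reQuadraticForm A x - c * reQuadraticForm B x := by
  simp [reQuadraticForm_apply, sub_mulVec, smul_mulVec, smul_re]

theorem posSemidef_iff_reQuadraticForm_nonneg {A : Matrix n n 𝕜} :
    A.PosSemidef ↔ A.IsHermitian ∧ ∀ x, 0 ≤ reQuadraticForm A x := by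
  rw [posSemidef_iff_dotProduct_mulVec]
  refine and_congr_right fun hA ↦ forall_congr' fun x ↦ ?_
  rw [RCLike.nonneg_iff (K := 𝕜), reQuadraticForm_apply,
    and_iff_left (hA.im_star_dotProduct_mulVec_self x)]

theorem exists_reQuadraticForm_pos {A : Matrix n n 𝕜} (hA : A.PosSemidef) (hA0 : A ≠ 0) :
    ∃ x, 0 < reQuadraticForm A x := by
  contrapose! hA0
  refine ext_iff_mulVec.2 fun x ↦ ?_
  have hre : re (star x ⬝ᵥ A *ᵥ x) = 0 := (hA0 x).antisymm (hA.re_dotProduct_nonneg x)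
  rw [zero_mulVec, ← hA.dotProduct_mulVec_zero_iff]
  exact RCLike.ext (by simpa using hre) (by simpa using hA.1.im_star_dotProduct_mulVec_self x)

theorem s_lemma_matrix {A B : Matrix n n 𝕜} (hA : A.IsHermitian) (hB : B.IsHermitian)
    (h : ∀ x, 0 ≤ reQuadraticForm B x → 0 ≤ reQuadraticForm A x)
    (hpos : ∃ x, 0 < reQuadraticForm B x) :
    ∃ c : ℝ, 0 ≤ c ∧ (A - c • B).PosSemidef := by
  obtain ⟨c, hc, hle⟩ := s_lemma h hpos
  refine ⟨c, hc, posSemidef_iff_reQuadraticForm_nonneg.2 ⟨hA.sub (hB.smul (.all c)), fun x ↦ ?_⟩⟩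
  rw [reQuadraticForm_sub_smul, sub_nonneg]
  exact hle x

theorem toLp_vecMulVec_star_mulVec (w : p → 𝕜) (u x : n → 𝕜) :
    toLp 2 (vecMulVec w (star u) *ᵥ x) = inner 𝕜 (toLp 2 u) (toLp 2 x) • toLp 2 w := by
  rw [vecMulVec_mulVec, EuclideanSpace.inner_toLp_toLp, dotProduct_comm, op_smul_eq_smul, toLp_smul]

variable [Fintype p]

theorem exists_contraction_mulVec_eq {u : n → 𝕜} {w : p → 𝕜} (h : ‖toLp 2 w‖ ≤ ‖toLp 2 u‖) :
    ∃ F : Matrix p n 𝕜, F *ᵥ u = w ∧ ∀ x, ‖toLp 2 (F *ᵥ x)‖ ≤ ‖toLp 2 x‖ := by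
  refine ⟨((‖toLp 2 u‖ : 𝕜) ^ 2)⁻¹ • vecMulVec w (star u), ?_, fun x ↦ ?_⟩
  · apply toLp_injective 2
    rw [smul_mulVec, toLp_smul, toLp_vecMulVec_star_mulVec, inner_self_eq_norm_sq_to_K]
    rcases eq_or_ne (toLp 2 u) 0 with hu | hu
    · have hw : toLp 2 w = 0 := by simpa [hu] using h
      simp [hw]
    · rw [inv_smul_smul₀ (by simpa using hu)]
  · rw [smul_mulVec, toLp_smul, toLp_vecMulVec_star_mulVec, norm_smul, norm_smul, norm_inv,
      norm_pow, norm_ofReal, abs_norm]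
    calc (‖toLp 2 u‖ ^ 2)⁻¹ * (‖inner 𝕜 (toLp 2 u) (toLp 2 x)‖ * ‖toLp 2 w‖)
        ≤ (‖toLp 2 u‖ ^ 2)⁻¹ * (‖toLp 2 u‖ * ‖toLp 2 x‖ * ‖toLp 2 u‖) := by
          gcongr
          exact norm_inner_le_norm _ _
      _ = (‖toLp 2 u‖ ^ 2)⁻¹ * ‖toLp 2 u‖ ^ 2 * ‖toLp 2 x‖ := by ring
      _ ≤ ‖toLp 2 x‖ := mul_le_of_le_one_left (norm_nonneg _) inv_mul_le_one

theorem reQuadraticForm_conjTranspose_mul_self (B : Matrix p n 𝕜) (x : n → 𝕜) :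
    reQuadraticForm (Bᴴ * B) x = ‖toLp 2 (B *ᵥ x)‖ ^ 2 := by
  rw [reQuadraticForm_apply, @norm_sq_eq_re_inner 𝕜, EuclideanSpace.inner_toLp_toLp,
    ← mulVec_mulVec, dotProduct_mulVec, ← star_mulVec, dotProduct_comm]

theorem reQuadraticForm_mul_mul_conjTranspose (N : Matrix n p 𝕜) (E : Matrix p p 𝕜) (x : n → 𝕜) :
    reQuadraticForm (N * E * Nᴴ) x = reQuadraticForm E (Nᴴ *ᵥ x) := by
  simp only [reQuadraticForm_apply, star_mulVec, conjTranspose_conjTranspose, ← mulVec_mulVec,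
    dotProduct_mulVec, vecMul_vecMul]

theorem reQuadraticForm_fromBlocks_elim (A : Matrix n n 𝕜) (B : Matrix n p 𝕜) (C : Matrix p n 𝕜)
    (D : Matrix p p 𝕜) (x : n → 𝕜) (y : p → 𝕜) :
    reQuadraticForm (fromBlocks A B C D) (Sum.elim x y) =
      reQuadraticForm A x + re (star x ⬝ᵥ B *ᵥ y) + re (star y ⬝ᵥ C *ᵥ x) +
        reQuadraticForm D y := by
  simp only [reQuadraticForm_apply, fromBlocks_mulVec, Sum.elim_comp_inl, Sum.elim_comp_inr,
    Function.star_sumElim, sumElim_dotProduct_sumElim, dotProduct_add, map_add]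
  ring

theorem reQuadraticForm_fromBlocks_neg_one [DecidableEq p] (A : Matrix n n 𝕜)
    (x : n → 𝕜) (y : p → 𝕜) :
    reQuadraticForm (fromBlocks A 0 0 (-1 : Matrix p p 𝕜)) (Sum.elim x y) =
      reQuadraticForm A x - ‖toLp 2 y‖ ^ 2 := by
  have hone : reQuadraticForm (1 : Matrix p p 𝕜) y = ‖toLp 2 y‖ ^ 2 := by
    simpa using reQuadraticForm_conjTranspose_mul_self (1 : Matrix p p 𝕜) y
  have hneg : reQuadraticForm (-1 : Matrix p p 𝕜) y = -reQuadraticForm 1 y := by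
    simp [reQuadraticForm_apply, neg_mulVec]
  simp [reQuadraticForm_fromBlocks_elim, hneg, hone, sub_eq_add_neg]

theorem reQuadraticForm_fromBlocks_elim_mulVec (A : Matrix n n 𝕜) (B : Matrix n p 𝕜)
    (C K : Matrix p n 𝕜) (x : n → 𝕜) :
    reQuadraticForm (fromBlocks A B C 0) (Sum.elim x (K *ᵥ x)) =
      reQuadraticForm (A + B * K + Kᴴ * C) x := by
  rw [reQuadraticForm_fromBlocks_elim]
  simp [reQuadraticForm_apply, add_mulVec, ← mulVec_mulVec, dotProduct_mulVec _ Kᴴ, ← star_mulVec]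

variable [Fintype q]

theorem posSemidef_conjTranspose_mul_self_sub_iff {A : Matrix p n 𝕜} {B : Matrix q n 𝕜} :
    (Aᴴ * A - Bᴴ * B).PosSemidef ↔ ∀ x, ‖toLp 2 (B *ᵥ x)‖ ≤ ‖toLp 2 (A *ᵥ x)‖ := by
  have hH : (Aᴴ * A - Bᴴ * B).IsHermitian :=
    (isHermitian_conjTranspose_mul_self A).sub (isHermitian_conjTranspose_mul_self B)
  rw [posSemidef_iff_reQuadraticForm_nonneg, and_iff_right hH]
  refine forall_congr' fun x ↦ ?_
  rw [← one_smul ℝ (Bᴴ * B), reQuadraticForm_sub_smul, one_mul,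
    reQuadraticForm_conjTranspose_mul_self, reQuadraticForm_conjTranspose_mul_self, sub_nonneg,
    sq_le_sq₀ (norm_nonneg _) (norm_nonneg _)]

theorem exists_mulVec_eq_and_posSemidef_sub {E : Matrix q q 𝕜} (hE : E.PosSemidef)
    {v : q → 𝕜} {w : p → 𝕜} (h : ‖toLp 2 w‖ ^ 2 ≤ reQuadraticForm E v) :
    ∃ D : Matrix p q 𝕜, D *ᵥ v = w ∧ (E - Dᴴ * D).PosSemidef := by
  classical
  obtain ⟨B, rfl⟩ := CStarAlgebra.nonneg_iff_eq_star_mul_self.mp hE.nonneg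
  rw [star_eq_conjTranspose] at h ⊢
  rw [reQuadraticForm_conjTranspose_mul_self, sq_le_sq₀ (norm_nonneg _) (norm_nonneg _)] at h
  obtain ⟨F, hFw, hF⟩ := exists_contraction_mulVec_eq h
  refine ⟨F * B, by rw [← mulVec_mulVec, hFw],
    posSemidef_conjTranspose_mul_self_sub_iff.2 fun x ↦ ?_⟩
  rw [← mulVec_mulVec]
  exact hF _

end ReQuadraticForm

theorem eq_zero_of_posSemidef_fromBlocks_zero₂₂ [Finite n] [Finite p] {A : Matrix n n 𝕜}
    {B : Matrix n p 𝕜} {C : Matrix p n 𝕜} (h : (fromBlocks A B C 0).PosSemidef) : B = 0 := by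
  have := Fintype.ofFinite n
  have := Fintype.ofFinite p
  refine ext_iff_mulVec.2 fun w ↦ ?_
  have hker := (h.dotProduct_mulVec_zero_iff (Sum.elim 0 w)).1 (by
    simp [fromBlocks_mulVec, dotProduct, Fintype.sum_sum_type])
  simpa [fromBlocks_mulVec] using congrArg (· ∘ Sum.inl) hker

variable [Fintype p]

theorem mul_mul_conjTranspose_ne_zero {E : Matrix p p 𝕜} (hE : E.PosDef) {N : Matrix n p 𝕜}
    (hN : N ≠ 0) : N * E * Nᴴ ≠ 0 := by
  classical
  contrapose! hN
  have hunit := hE.isUnit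
  obtain ⟨B, rfl⟩ := CStarAlgebra.nonneg_iff_eq_star_mul_self.mp hE.posSemidef.nonneg
  rw [star_eq_conjTranspose] at hN hunit
  have hNB : N * Bᴴ = 0 := self_mul_conjTranspose_eq_zero.1 (by
    simpa only [conjTranspose_mul, conjTranspose_conjTranspose, Matrix.mul_assoc] using hN)
  have hNE : N * (Bᴴ * B) = 0 := by rw [← Matrix.mul_assoc, hNB, Matrix.zero_mul]
  rw [← mul_nonsing_inv_cancel_right _ N ((isUnit_iff_isUnit_det _).1 hunit), hNE, Matrix.zero_mul]

theorem posSemidef_fromBlocks_smul_one_iff [Finite n] [DecidableEq p] (A : Matrix n n 𝕜)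
    (B : Matrix n p 𝕜) {c : ℝ} (hc : 0 < c) :
    (fromBlocks A B Bᴴ (c • 1)).PosSemidef ↔ (A - c⁻¹ • (B * Bᴴ)).PosSemidef := by
  have hpd : (c • (1 : Matrix p p 𝕜)).PosDef := PosDef.one.smul hc
  have := hpd.isUnit.invertible
  have hinv : (c • (1 : Matrix p p 𝕜))⁻¹ = c⁻¹ • 1 :=
    inv_eq_left_inv (by simp [smul_smul, hc.ne'])
  rw [PosDef.fromBlocks₂₂ _ _ hpd, hinv, Matrix.mul_smul, Matrix.mul_one, Matrix.smul_mul]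

variable [Fintype q] {C : Matrix n n 𝕜} {M : Matrix n p 𝕜} {E : Matrix q q 𝕜}
  {N : Matrix n q 𝕜}

theorem reQuadraticForm_fromBlocks_nonneg_of_forall_posSemidef [Fintype n] [DecidableEq p]
    (hE : E.PosSemidef)
    (h : ∀ D : Matrix p q 𝕜, (E - Dᴴ * D).PosSemidef →
      (-(C + M * D * Nᴴ + N * Dᴴ * Mᴴ)).PosSemidef) (z : n ⊕ p → 𝕜)
    (hz : 0 ≤ reQuadraticForm (fromBlocks (N * E * Nᴴ) 0 0 (-1)) z) :
    0 ≤ reQuadraticForm (fromBlocks (-C) (-M) (-M)ᴴ 0) z := by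
  obtain ⟨x, w, rfl⟩ : ∃ x w, z = Sum.elim x w := ⟨_, _, (Sum.elim_comp_inl_inr z).symm⟩
  rw [reQuadraticForm_fromBlocks_neg_one, sub_nonneg,
    reQuadraticForm_mul_mul_conjTranspose] at hz
  obtain ⟨D, rfl, hD⟩ := exists_mulVec_eq_and_posSemidef_sub hE hz
  have hblock : -C + -M * (D * Nᴴ) + (D * Nᴴ)ᴴ * (-M)ᴴ =
      -(C + M * D * Nᴴ + N * Dᴴ * Mᴴ) := by
    simp only [conjTranspose_mul, conjTranspose_neg, conjTranspose_conjTranspose, Matrix.neg_mul,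
      Matrix.mul_neg, Matrix.mul_assoc, neg_add]
  rw [mulVec_mulVec, reQuadraticForm_fromBlocks_elim_mulVec, hblock]
  exact (posSemidef_iff_reQuadraticForm_nonneg.1 (h D hD)).2 x

theorem exists_posSemidef_fromBlocks_of_forall_posSemidef [Finite n] [DecidableEq p]
    (hE : E.PosSemidef) (hN : N * E * Nᴴ ≠ 0)
    (h : ∀ D : Matrix p q 𝕜, (E - Dᴴ * D).PosSemidef →
      (-(C + M * D * Nᴴ + N * Dᴴ * Mᴴ)).PosSemidef) :
    ∃ c : ℝ, 0 ≤ c ∧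
      (fromBlocks (-C - c • (N * E * Nᴴ)) (-M) (-M)ᴴ (c • 1)).PosSemidef := by
  have := Fintype.ofFinite n
  have hNEN := hE.mul_mul_conjTranspose_same N
  have hC : (-C).IsHermitian := by simpa using (h 0 (by simpa using hE)).1
  obtain ⟨x, hx⟩ := exists_reQuadraticForm_pos hNEN hN
  obtain ⟨c, hc, hpsd⟩ := s_lemma_matrix
    (hC.fromBlocks rfl isHermitian_zero)
    (hNEN.1.fromBlocks conjTranspose_zero isHermitian_one.neg)
    (reQuadraticForm_fromBlocks_nonneg_of_forall_posSemidef hE h)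
    ⟨Sum.elim x 0, by simpa [reQuadraticForm_fromBlocks_neg_one] using hx⟩
  refine ⟨c, hc, ?_⟩
  simpa [fromBlocks_smul, sub_eq_add_neg, fromBlocks_neg, fromBlocks_add] using hpsd

theorem posSemidef_neg_add_of_posSemidef_neg_add_smul [Finite n] {μ : ℝ} (hμ : 0 < μ)
    (h : (-(C + μ • (M * Mᴴ) + μ⁻¹ • (N * E * Nᴴ))).PosSemidef)
    {D : Matrix p q 𝕜} (hD : (E - Dᴴ * D).PosSemidef) :
    (-(C + M * D * Nᴴ + N * Dᴴ * Mᴴ)).PosSemidef := by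
  have hsquare := (posSemidef_self_mul_conjTranspose (μ • M - N * Dᴴ)).smul (inv_pos.2 hμ).le
  have hgap := (hD.mul_mul_conjTranspose_same N).smul (inv_pos.2 hμ).le
  have hdecomp : -(C + M * D * Nᴴ + N * Dᴴ * Mᴴ) =
      -(C + μ • (M * Mᴴ) + μ⁻¹ • (N * E * Nᴴ)) +
        μ⁻¹ • ((μ • M - N * Dᴴ) * (μ • M - N * Dᴴ)ᴴ) + μ⁻¹ • (N * (E - Dᴴ * D) * Nᴴ) := by
    simp only [conjTranspose_sub, conjTranspose_smul, conjTranspose_mul,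
      conjTranspose_conjTranspose, star_trivial, Matrix.mul_sub, Matrix.sub_mul, Matrix.smul_mul,
      Matrix.mul_smul, Matrix.mul_assoc]
    match_scalars <;> field_simp <;> ring
  rw [hdecomp]
  exact (h.add hsquare).add hgap

theorem petersen_lemma_nonstrict_general [Finite n] (hM : M ≠ 0) (hE : E.PosSemidef)
    (hN : N * E * Nᴴ ≠ 0) :
    (∀ D : Matrix p q 𝕜, (E - Dᴴ * D).PosSemidef →
        (-(C + M * D * Nᴴ + N * Dᴴ * Mᴴ)).PosSemidef) ↔
      ∃ μ : ℝ, 0 < μ ∧ (-(C + μ • (M * Mᴴ) + μ⁻¹ • (N * E * Nᴴ))).PosSemidef := by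
  classical
  refine ⟨fun h ↦ ?_, fun ⟨μ, hμ, h⟩ D ↦ posSemidef_neg_add_of_posSemidef_neg_add_smul hμ h⟩
  obtain ⟨c, hc, hblock⟩ := exists_posSemidef_fromBlocks_of_forall_posSemidef hE hN h
  obtain rfl | hc := hc.eq_or_lt
  · rw [zero_smul ℝ (1 : Matrix p p 𝕜)] at hblock
    exact absurd (neg_eq_zero.1 (eq_zero_of_posSemidef_fromBlocks_zero₂₂ hblock)) hM
  · refine ⟨c⁻¹, inv_pos.2 hc, ?_⟩
    have hschur : -(C + c⁻¹ • (M * Mᴴ) + c⁻¹⁻¹ • (N * E * Nᴴ)) =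
        -C - c • (N * E * Nᴴ) - c⁻¹ • (-M * (-M)ᴴ) := by
      rw [inv_inv, conjTranspose_neg, Matrix.neg_mul, Matrix.mul_neg, neg_neg]
      abel
    rw [hschur]
    exact (posSemidef_fromBlocks_smul_one_iff _ _ hc).1 hblock

end RCLike

/-- **Petersen's lemma (non-strict version).**
For `𝐌 ≠ 0`, `𝐍 ≠ 0` and `𝐃̄ ≻ 0`: `𝐂 + 𝐌𝐃𝐍ᵀ + 𝐍𝐃ᵀ𝐌ᵀ ⪯ 0` for every `𝐃` with
`𝐃ᵀ𝐃 ⪯ 𝐃̄` iff there is `μ > 0` with `𝐂 + μ𝐌𝐌ᵀ + μ⁻¹𝐍𝐃̄𝐍ᵀ ⪯ 0`. -/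
theorem petersen_lemma_nonstrict {n p q : ℕ}
    (C : Matrix (Fin n) (Fin n) ℝ) (M : Matrix (Fin n) (Fin p) ℝ)
    (Dbar : Matrix (Fin q) (Fin q) ℝ) (Nm : Matrix (Fin n) (Fin q) ℝ)
    (hC : C.IsSymm) (hM : M ≠ 0) (hDbar : Dbar.IsSymm) (hDbarPD : Dbar.PosDef)
    (hN : Nm ≠ 0) :
    (∀ D : Matrix (Fin p) (Fin q) ℝ, (Dbar - Dᵀ * D).PosSemidef →
        (-(C + M * D * Nmᵀ + Nm * Dᵀ * Mᵀ)).PosSemidef) ↔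
      (∃ μ : ℝ, 0 < μ ∧
        (-(C + μ • (M * Mᵀ) + μ⁻¹ • (Nm * Dbar * Nmᵀ))).PosSemidef) := by
  simpa only [conjTranspose_eq_transpose_of_trivial] using
    petersen_lemma_nonstrict_general (C := C) hM hDbarPD.posSemidef
      (mul_mul_conjTranspose_ne_zero hDbarPD hN)
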